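/- arXiv:2302.13030 — 2 statements merged into one kernel-verified Lean document; each statement's English description precedes it below -/
import Mathlib

section
/- For n ≥ 1 and β ∈ (0,n), the Fourier transform of the tempered distribution |x|^{β-n} equals γ(β)(2π)^{-β}|ξ|^{-β} in the distributional sense: for every Schwartz function φ, ∫_{ℝⁿ} |x|^{β-n} φ̂(x) dx = γ(β) ∫_{ℝⁿ} (2π)^{-β} |x|^{-β} φ(x) dx, where γ(β) = π^{n/2} 2^β Γ(β/2)/Γ((n-β)/2). -/
open MeasureTheory Real SchwartzMap Filter
open scoped FourierTransform

noncomputable section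

abbrev Rn (n : ℕ) := EuclideanSpace ℝ (Fin n)

/-- The chirp function `e_α(x) = exp(2πi Σₖ (cot αₖ / 2) xₖ²)`. -/
def chirp {n : ℕ} (α : Rn n) (x : Rn n) : ℂ :=
  Complex.exp (2 * (π : ℂ) * Complex.I *
    ((∑ k, Real.cot (α k) / 2 * (x k) ^ 2 : ℝ) : ℂ))

/-- The constant `c(α) = ∏ₖ √(1 - i cot αₖ)`. -/
def cConst {n : ℕ} (α : Rn n) : ℂ :=
  ∏ k, (1 - Complex.I * (Real.cot (α k) : ℂ)) ^ ((1 : ℂ) / 2)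

/-- The FRFT kernel `K_α(x,u)`. -/
def frftKernel {n : ℕ} (α : Rn n) (x u : Rn n) : ℂ :=
  ∏ k, (1 - Complex.I * (Real.cot (α k) : ℂ)) ^ ((1 : ℂ) / 2) *
    Complex.exp (2 * (π : ℂ) * Complex.I *
      ((Real.cot (α k) / 2 * ((x k) ^ 2 + (u k) ^ 2)
        - x k * u k / Real.sin (α k) : ℝ) : ℂ))

/-- The multidimensional fractional Fourier transform. -/
def frft {n : ℕ} (α : Rn n) (f : Rn n → ℂ) (u : Rn n) : ℂ :=
  ∫ x, f x * frftKernel α x u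

/-- `ũ = (u₁ csc α₁, ..., uₙ csc αₙ)`. -/
def tilde {n : ℕ} (α u : Rn n) : Rn n :=
  (EuclideanSpace.equiv (Fin n) ℝ).symm fun k => u k / Real.sin (α k)

/-- `γ(β) = π^{n/2} 2^β Γ(β/2) / Γ((n-β)/2)`. -/
def gammaC (n : ℕ) (β : ℝ) : ℝ :=
  π ^ ((n : ℝ) / 2) * 2 ^ β * Real.Gamma (β / 2) / Real.Gamma (((n : ℝ) - β) / 2)

/-- The classical Riesz potential `I_β`. -/
def rieszPot (n : ℕ) (β : ℝ) (f : Rn n → ℂ) (x : Rn n) : ℂ :=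
  ((1 / gammaC n β : ℝ) : ℂ) * ∫ y, f y / ((‖x - y‖ ^ ((n : ℝ) - β) : ℝ) : ℂ)

/-- The fractional Riesz potential related to chirp functions `I_β^α`. -/
def rieszPotChirp {n : ℕ} (α : Rn n) (β : ℝ) (f : Rn n → ℂ) (x : Rn n) : ℂ :=
  ((1 / gammaC n β : ℝ) : ℂ) * chirp (-α) x *
    ∫ y, f y * chirp α y / ((‖x - y‖ ^ ((n : ℝ) - β) : ℝ) : ℂ)

/-- `c_n = Γ((n+1)/2)/π^{(n+1)/2}`. -/
def nConst (n : ℕ) : ℝ := Real.Gamma (((n : ℝ) + 1) / 2) / π ^ (((n : ℝ) + 1) / 2)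

/-- The j-th fractional Riesz transform related to chirp functions (principal value). -/
def rieszTransChirp {n : ℕ} (α : Rn n) (j : Fin n) (f : Rn n → ℂ) (x : Rn n) : ℂ :=
  ((nConst n : ℝ) : ℂ) * chirp (-α) x *
    limUnder (nhdsWithin (0 : ℝ) (Set.Ioi 0)) fun ε =>
      ∫ y in {y : Rn n | ε < dist x y},
        (((x j - y j) / ‖x - y‖ ^ ((n : ℝ) + 1) : ℝ) : ℂ) * f y * chirp α y

/-- Partial derivative in the k-th coordinate direction. -/
def partialD {n : ℕ} (k : Fin n) (g : Rn n → ℂ) (y : Rn n) : ℂ :=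
  fderiv ℝ g y (EuclideanSpace.single k 1)

/-- `α` has no coordinate in `πℤ`. -/
def notPiZ {n : ℕ} (α : Rn n) : Prop := ∀ k, ∀ m : ℤ, α k ≠ m * π

/-!
The Gaussian `exp (-π t ‖x‖²)` has Fourier transform `t ^ (-n/2) exp (-π ‖x‖² / t)`, so pairing `f`
and `𝓕 f` with Gaussians gives two functions of the scale `t` exchanged by `t ↦ t⁻¹`, up to the
factor `t ^ (-n/2)`. Since `‖x‖ ^ (-s)` is, up to the factor `Γ_ℝ(s)`, the Mellin transform at
`s / 2` of these Gaussians, Fubini turns this symmetry into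
`Γ_ℝ(n - s) ∫ ‖x‖ ^ (s - n) 𝓕 f = Γ_ℝ(s) ∫ ‖x‖ ^ (-s) f`, the local functional equation of Tate.
-/

section Mellin

theorem hasMellin_exp_neg {s : ℂ} (hs : 0 < s.re) :
    HasMellin (fun t : ℝ ↦ ((rexp (-t) : ℝ) : ℂ)) s (Complex.Gamma s) := by
  refine ⟨?_, ?_⟩
  · simpa only [MellinConvergent, smul_eq_mul, mul_comm] using Complex.GammaIntegral_convergent hs
  · rw [Complex.Gamma_eq_integral hs, Complex.GammaIntegral_eq_mellin]

variable {X E : Type*} [MeasurableSpace X] [NormedAddCommGroup E] [NormedSpace ℂ E]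
  {μ : Measure X} {g : ℝ → ℂ} {c : X → ℝ} {f : X → E} {s : ℂ}

theorem integral_norm_cpow_smul_comp_mul_left (g : ℝ → E) (s : ℂ) {a : ℝ} (ha : 0 < a) :
    ∫ t in Set.Ioi (0 : ℝ), ‖(t : ℂ) ^ (s - 1) • g (a * t)‖
      = ‖(a : ℂ) ^ (-s)‖ * ∫ t in Set.Ioi (0 : ℝ), ‖(t : ℂ) ^ (s - 1) • g t‖ := by
  calc ∫ t in Set.Ioi (0 : ℝ), ‖(t : ℂ) ^ (s - 1) • g (a * t)‖
      = ∫ t in Set.Ioi (0 : ℝ),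
          ‖(a : ℂ) ^ (1 - s)‖ * ‖((a * t : ℝ) : ℂ) ^ (s - 1) • g (a * t)‖ := by
        refine setIntegral_congr_fun measurableSet_Ioi fun t (ht : 0 < t) ↦ ?_
        have hcancel : (a : ℂ) ^ (1 - s) * (a : ℂ) ^ (s - 1) = 1 := by
          rw [← Complex.cpow_add _ _ (Complex.ofReal_ne_zero.2 ha.ne')]
          simp
        simp only [← norm_smul, ← mul_smul]
        rw [Complex.ofReal_mul, Complex.mul_cpow_ofReal_nonneg ha.le ht.le, ← mul_assoc, hcancel,
          one_mul]
    _ = ‖(a : ℂ) ^ (1 - s)‖ * (a⁻¹ * ∫ t in Set.Ioi (0 : ℝ), ‖(t : ℂ) ^ (s - 1) • g t‖) := by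
        rw [integral_const_mul,
          integral_comp_mul_left_Ioi (fun t : ℝ ↦ ‖(t : ℂ) ^ (s - 1) • g t‖) 0 ha, mul_zero,
          smul_eq_mul]
    _ = ‖(a : ℂ) ^ (-s)‖ * ∫ t in Set.Ioi (0 : ℝ), ‖(t : ℂ) ^ (s - 1) • g t‖ := by
        simp only [Complex.norm_cpow_eq_rpow_re_of_pos ha]
        rw [← mul_assoc, ← Real.rpow_neg_one, ← Real.rpow_add ha, Complex.sub_re, Complex.neg_re,
          Complex.one_re]
        ring_nf

variable [SFinite μ]

theorem integrable_prod_cpow_smul_comp_mul (hg : Measurable g) (hgs : MellinConvergent g s)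
    (hc : Measurable c) (hc_pos : ∀ᵐ x ∂μ, 0 < c x)
    (hcf : Integrable (fun x ↦ (c x : ℂ) ^ (-s) • f x) μ) :
    Integrable (Function.uncurry fun (t : ℝ) x ↦ (t : ℂ) ^ (s - 1) • g (c x * t) • f x)
      ((volume.restrict (Set.Ioi 0)).prod μ) := by
  have hmeas : AEStronglyMeasurable
      (Function.uncurry fun (t : ℝ) x ↦ (t : ℂ) ^ (s - 1) • g (c x * t) • f x)
      ((volume.restrict (Set.Ioi 0)).prod μ) := by
    have hpow : Measurable fun p : ℝ × X ↦ (p.1 : ℂ) ^ (s - 1) := by fun_prop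
    have hker : Measurable fun p : ℝ × X ↦ g (c p.2 * p.1) := by fun_prop
    have hf : AEStronglyMeasurable f μ := by
      have hcs : Measurable fun x ↦ (c x : ℂ) ^ s := by fun_prop
      refine (hcs.aestronglyMeasurable.smul hcf.aestronglyMeasurable).congr ?_
      filter_upwards [hc_pos] with x hx
      simp [smul_smul, Complex.cpow_neg, Complex.cpow_eq_zero_iff, hx.ne']
    exact hpow.aestronglyMeasurable.smul (hker.aestronglyMeasurable.smul hf.comp_snd)
  refine (integrable_prod_iff' hmeas).2 ⟨?_, ?_⟩
  · filter_upwards [hc_pos] with x hx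
    simpa only [Function.uncurry_apply_pair, smul_assoc] using
      Integrable.smul_const ((MellinConvergent.comp_mul_left hx).2 hgs) (f x)
  · refine (hcf.norm.mul_const (∫ t in Set.Ioi (0 : ℝ), ‖(t : ℂ) ^ (s - 1) • g t‖)).congr ?_
    filter_upwards [hc_pos] with x hx
    simp only [Function.uncurry_apply_pair, ← smul_assoc, norm_smul _ (f x)]
    rw [integral_mul_const, integral_norm_cpow_smul_comp_mul_left g s hx]
    ring

theorem mellin_integral_comp_mul_smul [CompleteSpace E] (hg : Measurable g)
    (hgs : MellinConvergent g s) (hc : Measurable c) (hc_pos : ∀ᵐ x ∂μ, 0 < c x)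
    (hcf : Integrable (fun x ↦ (c x : ℂ) ^ (-s) • f x) μ) :
    mellin (fun t ↦ ∫ x, g (c x * t) • f x ∂μ) s
      = mellin g s • ∫ x, (c x : ℂ) ^ (-s) • f x ∂μ := by
  calc mellin (fun t ↦ ∫ x, g (c x * t) • f x ∂μ) s
      = ∫ t in Set.Ioi (0 : ℝ), ∫ x, (t : ℂ) ^ (s - 1) • g (c x * t) • f x ∂μ := by
        simp only [mellin, integral_smul]
    _ = ∫ x, mellin (fun t ↦ g (c x * t)) s • f x ∂μ := by
        rw [integral_integral_swap (integrable_prod_cpow_smul_comp_mul hg hgs hc hc_pos hcf)]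
        refine integral_congr_ae (ae_of_all _ fun x ↦ ?_)
        simp only [mellin]
        rw [← integral_smul_const]
        simp only [smul_assoc]
    _ = ∫ x, mellin g s • (c x : ℂ) ^ (-s) • f x ∂μ := by
        refine integral_congr_ae ?_
        filter_upwards [hc_pos] with x hx
        rw [mellin_comp_mul_left g s hx, smul_assoc, smul_comm]
    _ = mellin g s • ∫ x, (c x : ℂ) ^ (-s) • f x ∂μ := integral_smul _ _

end Mellin

section GaussianMean

theorem ofReal_pi_mul_sq_cpow_neg_half {r : ℝ} (hr : 0 ≤ r) (s : ℂ) :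
    ((π * r ^ 2 : ℝ) : ℂ) ^ (-(s / 2)) = (π : ℂ) ^ (-s / 2) * (r : ℂ) ^ (-s) := by
  have hsq : ((r ^ 2 : ℝ) : ℂ) ^ (-(s / 2)) = (r : ℂ) ^ (-s) := by
    rw [Complex.ofReal_pow, ← Complex.cpow_ofNat_mul'
      (by simpa [Complex.arg_ofReal_of_nonneg hr] using pi_pos)
      (by simpa [Complex.arg_ofReal_of_nonneg hr] using pi_pos.le)]
    ring_nf
  rw [Complex.ofReal_mul, Complex.mul_cpow_ofReal_nonneg pi_pos.le (sq_nonneg r), hsq, neg_div]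

variable {V E : Type*} [NormedAddCommGroup V] [MeasurableSpace V]
  [NormedAddCommGroup E] [NormedSpace ℂ E]

/-- The pairing of `f` with the Gaussian `exp (-π t ‖x‖²)`, as a function of the scale `t`. It plays
the role of the theta function in the proof of the functional equation. -/
def gaussianMean (μ : Measure V) (f : V → E) (t : ℝ) : E :=
  ∫ x, Complex.exp (-(π * t) * ‖x‖ ^ 2) • f x ∂μ

theorem mellin_gaussianMean [OpensMeasurableSpace V] [CompleteSpace E] {μ : Measure V} [SFinite μ]
    [NullSingletonClass μ] {f : V → E} {s : ℂ} (hs : 0 < s.re)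
    (hfs : Integrable (fun x ↦ (‖x‖ : ℂ) ^ (-s) • f x) μ) :
    mellin (gaussianMean μ f) (s / 2)
      = Complex.Gammaℝ s • ∫ x, (‖x‖ : ℂ) ^ (-s) • f x ∂μ := by
  obtain ⟨hconv, hval⟩ := hasMellin_exp_neg (s := s / 2) (by simpa using hs)
  have hpos : ∀ᵐ x ∂μ, 0 < π * ‖x‖ ^ 2 := by
    filter_upwards [compl_mem_ae_iff.2 (measure_singleton (0 : V))] with x hx
    have : 0 < ‖x‖ := norm_pos_iff.2 hx
    positivity
  have hmean : gaussianMean μ f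
      = fun t ↦ ∫ x, ((rexp (-(π * ‖x‖ ^ 2 * t)) : ℝ) : ℂ) • f x ∂μ := by
    ext t
    refine integral_congr_ae (ae_of_all _ fun x ↦ ?_)
    push_cast
    ring_nf
  rw [hmean, mellin_integral_comp_mul_smul (by fun_prop) hconv (by fun_prop) hpos ?_, hval]
  · simp only [ofReal_pi_mul_sq_cpow_neg_half (norm_nonneg _), mul_smul, integral_smul,
      Complex.Gammaℝ_def]
    rw [smul_smul, smul_smul, mul_comm]
  · simpa only [ofReal_pi_mul_sq_cpow_neg_half (norm_nonneg _), mul_smul] using!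
      hfs.smul ((π : ℂ) ^ (-s / 2))

end GaussianMean

open Module (finrank)

section Integrability

variable {V E : Type*} [NormedAddCommGroup V] [NormedSpace ℝ V] [FiniteDimensional ℝ V]
  [MeasurableSpace V] [BorelSpace V] [NormedAddCommGroup E] [NormedSpace ℂ E]
  {μ : Measure V} [μ.IsAddHaarMeasure]

theorem integrable_cpow_norm_smul {f : V → E} {s : ℂ} (hs : 0 < s.re) (hsn : s.re < finrank ℝ V)
    (hf : Integrable f μ) {C : ℝ} (hC : ∀ x, ‖f x‖ ≤ C) :
    Integrable (fun x ↦ (‖x‖ : ℂ) ^ (-s) • f x) μ := by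
  have hmeas : AEStronglyMeasurable (fun x ↦ (‖x‖ : ℂ) ^ (-s) • f x) μ := by
    have hpow : Measurable fun x : V ↦ (‖x‖ : ℂ) ^ (-s) := by fun_prop
    exact hpow.aestronglyMeasurable.smul hf.aestronglyMeasurable
  have hnorm (x : V) : ‖(‖x‖ : ℂ) ^ (-s) • f x‖ = ‖f x‖ * ‖x‖ ^ (-s.re) := by
    rw [norm_smul, Complex.norm_cpow_eq_rpow_re_of_nonneg (norm_nonneg x) (by simpa using hs.ne'),
      Complex.neg_re, mul_comm]
  have hball : IntegrableOn (fun x ↦ (‖x‖ : ℂ) ^ (-s) • f x) (Metric.ball 0 1) μ := by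
    have hfinrank : 1 ≤ finrank ℝ V := by exact_mod_cast hs.trans hsn
    refine integrableOn_ball_of_norm_le_rpow (C := C) hfinrank hsn (ae_of_all _ fun x ↦ ?_) hmeas
    rw [hnorm]
    gcongr
    exact hC x
  have hcompl : IntegrableOn (fun x ↦ (‖x‖ : ℂ) ^ (-s) • f x) (Metric.ball 0 1)ᶜ μ := by
    refine hf.norm.integrableOn.mono' hmeas.restrict
      (ae_restrict_of_forall_mem Metric.isOpen_ball.measurableSet.compl fun x hx ↦ ?_)
    have hx : 1 ≤ ‖x‖ := by simpa using hx
    rw [hnorm]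
    exact mul_le_of_le_one_right (norm_nonneg _)
      (Real.rpow_le_one_of_one_le_of_nonpos hx (neg_nonpos.2 hs.le))
  simpa using hball.union hcompl

theorem integrable_cpow_norm_smul_schwartz (φ : 𝓢(V, E)) {s : ℂ} (hs : 0 < s.re)
    (hsn : s.re < finrank ℝ V) : Integrable (fun x ↦ (‖x‖ : ℂ) ^ (-s) • φ x) μ :=
  integrable_cpow_norm_smul hs hsn φ.integrable (φ.norm_le_seminorm ℝ)

end Integrability

section Fourier

variable {V E : Type*} [NormedAddCommGroup V] [InnerProductSpace ℝ V] [FiniteDimensional ℝ V]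
  [MeasurableSpace V] [BorelSpace V] [NormedAddCommGroup E] [NormedSpace ℂ E] [CompleteSpace E]

theorem integral_fourier_smul_eq {g : V → ℂ} {f : V → E} (hg : Integrable g)
    (hf : Integrable f) : ∫ x, 𝓕 g x • f x = ∫ x, g x • 𝓕 f x := by
  simpa using! VectorFourier.integral_fourierIntegral_smul_eq_flip (L := innerₗ V)
    Real.continuous_fourierChar continuous_inner hg hf

theorem gaussianMean_fourier {f : V → E} (hf : Integrable f) {t : ℝ} (ht : 0 < t) :
    gaussianMean volume (𝓕 f) t
      = (t : ℂ) ^ (-(finrank ℝ V / 2 : ℂ)) • gaussianMean volume f t⁻¹ := by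
  have hre : 0 < (π * t : ℂ).re := by
    rw [← Complex.ofReal_mul, Complex.ofReal_re]
    positivity
  have hgauss : Integrable fun x : V ↦ Complex.exp (-(π * t : ℂ) * ‖x‖ ^ 2) := by
    simpa using GaussianFourier.integrable_cexp_neg_mul_sq_norm_add hre 0 (0 : V)
  have hπ : (π : ℂ) ≠ 0 := Complex.ofReal_ne_zero.2 pi_ne_zero
  have hfactor : (π / (π * t) : ℂ) ^ (finrank ℝ V / 2 : ℂ)
      = (t : ℂ) ^ (-(finrank ℝ V / 2 : ℂ)) := by
    have harg : (t : ℂ).arg ≠ π := by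
      rw [Complex.arg_ofReal_of_nonneg ht.le]
      exact pi_ne_zero.symm
    rw [div_mul_cancel_left₀ hπ, Complex.cpow_neg, Complex.inv_cpow _ _ harg]
  have hexp (x : V) : (-π ^ 2 * ‖x‖ ^ 2 / (π * t) : ℂ) = -(π * (t⁻¹ : ℝ)) * ‖x‖ ^ 2 := by
    push_cast
    field_simp
  simp only [gaussianMean]
  rw [← integral_fourier_smul_eq hgauss hf, ← integral_smul]
  simp only [fourier_gaussian_innerProductSpace hre, hfactor, hexp, mul_smul]

theorem mellin_gaussianMean_fourier {f : V → E} (hf : Integrable f) (s : ℂ) :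
    mellin (gaussianMean volume (𝓕 f)) ((finrank ℝ V - s) / 2)
      = mellin (gaussianMean volume f) (s / 2) := by
  calc mellin (gaussianMean volume (𝓕 f)) ((finrank ℝ V - s) / 2)
      = mellin (fun t ↦ (t : ℂ) ^ (-(finrank ℝ V / 2 : ℂ)) • gaussianMean volume f t⁻¹)
          ((finrank ℝ V - s) / 2) := setIntegral_congr_fun measurableSet_Ioi fun t ht ↦ by
        simp only [gaussianMean_fourier hf ht]
    _ = mellin (gaussianMean volume f) (s / 2) := by
        rw [mellin_cpow_smul, mellin_comp_inv]
        ring_nf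

theorem fourier_riesz_kernel_general {f : V → E} {s : ℂ} (hs : 0 < s.re) (hsn : s.re < finrank ℝ V)
    (hf : Integrable f) (hfs : Integrable fun x ↦ (‖x‖ : ℂ) ^ (-s) • f x)
    (hFs : Integrable fun x ↦ (‖x‖ : ℂ) ^ (s - finrank ℝ V) • 𝓕 f x) :
    ∫ x, (‖x‖ : ℂ) ^ (s - finrank ℝ V) • 𝓕 f x
      = (Complex.Gammaℝ s / Complex.Gammaℝ (finrank ℝ V - s)) •
          ∫ x, (‖x‖ : ℂ) ^ (-s) • f x := by
  have : Nontrivial V := Module.finrank_pos_iff.1 (by exact_mod_cast hs.trans hsn)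
  have hs' : 0 < (finrank ℝ V - s).re := by simpa using hsn
  have hfunc : Complex.Gammaℝ (finrank ℝ V - s) • ∫ x, (‖x‖ : ℂ) ^ (s - finrank ℝ V) • 𝓕 f x
      = Complex.Gammaℝ s • ∫ x, (‖x‖ : ℂ) ^ (-s) • f x := by
    rw [← mellin_gaussianMean hs hfs, ← mellin_gaussianMean_fourier hf s,
      mellin_gaussianMean hs' (by simpa using hFs), neg_sub]
  rw [div_eq_inv_mul, mul_smul, ← hfunc, inv_smul_smul₀ (Complex.Gammaℝ_ne_zero_of_re_pos hs')]

end Fourier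

theorem ofReal_gammaC_mul (n : ℕ) (β : ℝ) :
    ((gammaC n β * (2 * π) ^ (-β) : ℝ) : ℂ) = Complex.Gammaℝ β / Complex.Gammaℝ (n - β) := by
  have hpi : π ^ ((n : ℝ) / 2) * π ^ (-β) = π ^ (-β / 2) / π ^ (-(n - β) / 2) := by
    rw [← Real.rpow_add pi_pos, ← Real.rpow_sub pi_pos]
    ring_nf
  have htwo : (2 : ℝ) ^ β * 2 ^ (-β) = 1 := by simp [← Real.rpow_add two_pos]
  have hreal : gammaC n β * (2 * π) ^ (-β)
      = π ^ (-β / 2) * Real.Gamma (β / 2)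
        / (π ^ (-(n - β) / 2) * Real.Gamma ((n - β) / 2)) := by
    rw [gammaC, Real.mul_rpow two_pos.le pi_pos.le, mul_div_mul_comm, ← hpi]
    linear_combination
      π ^ ((n : ℝ) / 2) * π ^ (-β) * (Real.Gamma (β / 2) / Real.Gamma ((n - β) / 2)) * htwo
  rw [hreal]
  simp only [Complex.Gammaℝ_def]
  push_cast [Complex.ofReal_cpow pi_pos.le, ← Complex.Gamma_ofReal]
  rfl

/-- Fourier transform of `|x|^{β-n}` in the distributional sense. -/
theorem fourier_riesz_kernel {n : ℕ} (hn : 1 ≤ n) (β : ℝ) (hβ : 0 < β) (hβn : β < n)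
    (φ : 𝓢(Rn n, ℂ)) :
    ∫ x : Rn n, ((‖x‖ ^ (β - (n : ℝ)) : ℝ) : ℂ) * 𝓕 (⇑φ) x
      = (gammaC n β : ℂ) *
          ∫ x : Rn n, (((2 * π) ^ (-β) * ‖x‖ ^ (-β) : ℝ) : ℂ) * φ x := by
  have hF := integrable_cpow_norm_smul_schwartz (μ := volume) (𝓕 φ) (s := n - β)
    (by simpa) (by simpa)
  simpa [← ofReal_gammaC_mul, Complex.ofReal_cpow, pi_nonneg, mul_assoc, integral_const_mul] using
    fourier_riesz_kernel_general (s := β) hβ (by simpa) φ.integrable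
      (integrable_cpow_norm_smul_schwartz φ hβ (by simpa))
      (by simpa [SchwartzMap.fourier_coe] using hF)
end
end

section
/- Let β ∈ (0,n) and α ∈ ℝⁿ with no coordinate in πℤ. For every Schwartz function f, the fractional Riesz potential related to chirp functions satisfies F_α(I_β^α f)(u) = (2π)^{-β} |ũ|^{-β} F_α(f)(u) in the sense of tempered distributions, where ũ = (u₁ csc α₁, ..., uₙ csc αₙ). -/
open MeasureTheory Real SchwartzMap Filter
open scoped FourierTransform

noncomputable section

/-! The power `‖x‖⁻ˢ` is, up to a Gamma factor, the Mellin transform of the Gaussians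
`exp (-π t ‖x‖²)`. For `g` and `h` integrable, the Fourier transform of the Gaussian turns the
pairing `∬ g(y) 𝓕h(x) exp (-π t ‖x - y‖²)` into `t ^ (-d/2) Φ(1/t)` with
`Φ(t) = ∫ 𝓕g(ξ) h(ξ) exp (-π t ‖ξ‖²)`, and taking Mellin transforms gives the functional equation
which exhibits `(2π‖ξ‖)^(-β)` as the Fourier multiplier of `I_β`. The fractional Fourier transform
is the Fourier transform preceded and followed by multiplication by the unimodular `e_α`, evaluated
at `ũ`. The chirps `e_{-α}` and `e_α` around `I_β` cancel against those of `F_α`, and the diagonal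
change of variables `u ↦ ũ` is self-adjoint, so it can be carried to the other side of the
pairing. -/

section Mellin

variable {X : Type*} [MeasurableSpace X] {μ : Measure X} [SFinite μ] {w : X → ℂ} {s : ℂ}

lemma integrableOn_cpow_mul_exp_neg {a : ℝ} (hs : 0 < s.re) (ha : 0 < a) :
    IntegrableOn (fun t : ℝ => (t : ℂ) ^ (s - 1) * (Real.exp (-(a * t)) : ℂ)) (Set.Ioi 0) := by
  have h := integrableOn_rpow_mul_exp_neg_mul_rpow (s := s.re - 1) (p := 1) (b := a)
    (by linarith) one_pos ha
  refine h.mono' (by fun_prop) ((ae_restrict_iff' measurableSet_Ioi).2 <| .of_forall fun t ht => ?_)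
  rw [norm_mul, Complex.norm_cpow_eq_rpow_re_of_pos ht, Complex.norm_of_nonneg (by positivity)]
  simp

lemma integral_norm_cpow_mul_exp_neg {a : ℝ} (hs : 0 < s.re) (ha : 0 < a) :
    ∫ t in Set.Ioi (0 : ℝ), ‖(t : ℂ) ^ (s - 1) * (Real.exp (-(a * t)) : ℂ)‖
      = Real.Gamma s.re / a ^ s.re := by
  rw [div_eq_inv_mul, ← Real.inv_rpow ha.le, ← one_div,
    ← Real.integral_rpow_mul_exp_neg_mul_Ioi hs ha]
  refine setIntegral_congr_fun measurableSet_Ioi fun t ht => ?_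
  rw [norm_mul, Complex.norm_cpow_eq_rpow_re_of_pos ht, Complex.norm_of_nonneg (by positivity),
    Complex.sub_re, Complex.one_re]

lemma integral_cpow_mul_exp_neg {a : ℝ} (hs : 0 < s.re) (ha : 0 < a) :
    ∫ t in Set.Ioi (0 : ℝ), (t : ℂ) ^ (s - 1) * (Real.exp (-(a * t)) : ℂ)
      = Complex.Gamma s / (a : ℂ) ^ s := by
  have h := Complex.integral_cpow_mul_exp_neg_mul_Ioi (a := s) (r := a) hs (by simpa using ha)
  rw [one_div, Complex.inv_cpow _ _ (Complex.arg_ofReal_of_nonneg ha.le ▸ pi_pos.ne)] at h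
  rw [div_eq_inv_mul, ← h]
  simp

theorem mellin_integral_mul_exp_neg {p : X → ℝ} (hs : 0 < s.re) (hpm : Measurable p)
    (hp : ∀ᵐ x ∂μ, 0 < p x) (hw : Integrable (fun x => w x / (p x : ℂ) ^ s) μ) :
    mellin (fun t => ∫ x, w x * (Real.exp (-(p x * t)) : ℂ) ∂μ) s
      = Complex.Gamma s * ∫ x, w x / (p x : ℂ) ^ s ∂μ := by
  let F : X → ℝ → ℂ := fun x t => w x * ((t : ℂ) ^ (s - 1) * (Real.exp (-(p x * t)) : ℂ))
  have hwm : AEStronglyMeasurable w μ := by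
    refine (hw.aestronglyMeasurable.mul (g := fun x => (p x : ℂ) ^ s)
      (by fun_prop : Measurable _).aestronglyMeasurable).congr ?_
    filter_upwards [hp] with x hx
    exact div_mul_cancel₀ _ ((Complex.cpow_ne_zero_iff_of_exponent_ne_zero
      (by rintro rfl; simp at hs)).2 (by exact_mod_cast hx.ne'))
  have hFm : AEStronglyMeasurable (Function.uncurry F) (μ.prod (volume.restrict (Set.Ioi 0))) :=
    hwm.comp_fst.mul (by fun_prop : Measurable _).aestronglyMeasurable
  have hF : Integrable (Function.uncurry F) (μ.prod (volume.restrict (Set.Ioi 0))) := by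
    refine (integrable_prod_iff hFm).2 ⟨?_, ?_⟩
    · filter_upwards [hp] with x hx
      exact (integrableOn_cpow_mul_exp_neg hs hx).const_mul (w x)
    · refine (hw.norm.const_mul (Real.Gamma s.re)).congr ?_
      filter_upwards [hp] with x hx
      simp only [Function.uncurry, F, norm_mul (w x), integral_const_mul]
      rw [integral_norm_cpow_mul_exp_neg hs hx, norm_div, Complex.norm_cpow_eq_rpow_re_of_pos hx]
      ring
  calc
    _ = ∫ t in Set.Ioi (0 : ℝ), ∫ x, F x t ∂μ := by
      simp only [mellin, smul_eq_mul, F, mul_left_comm (w _), integral_const_mul]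
    _ = ∫ x, (∫ t in Set.Ioi (0 : ℝ), F x t) ∂μ := (integral_integral_swap hF).symm
    _ = ∫ x, Complex.Gamma s * (w x / (p x : ℂ) ^ s) ∂μ := by
      refine integral_congr_ae ?_
      filter_upwards [hp] with x hx
      simp only [F, integral_const_mul, integral_cpow_mul_exp_neg hs hx]
      ring
    _ = _ := integral_const_mul _ _

theorem mellin_integral_mul_gaussian {r : X → ℝ} (hs : 0 < s.re) (hrm : Measurable r)
    (hr : ∀ᵐ x ∂μ, 0 < r x) (hw : Integrable (fun x => w x / (r x : ℂ) ^ s) μ) :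
    mellin (fun t => ∫ x, w x * (Real.exp (-(π * t * r x ^ 2)) : ℂ) ∂μ) (s / 2)
      = Complex.Gammaℝ s * ∫ x, w x / (r x : ℂ) ^ s ∂μ := by
  have hpow : ∀ᵐ x ∂μ, w x / ((π * r x ^ 2 : ℝ) : ℂ) ^ (s / 2)
      = (π : ℂ) ^ (-s / 2) * (w x / (r x : ℂ) ^ s) := by
    filter_upwards [hr] with x hx
    have hsq : (r x : ℂ) ^ s = ((r x ^ 2 : ℝ) : ℂ) ^ (s / 2) := by
      rw [sq, Complex.ofReal_mul, Complex.mul_cpow_ofReal_nonneg hx.le hx.le,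
        ← Complex.cpow_add _ _ (by exact_mod_cast hx.ne'), add_halves]
    rw [hsq, Complex.ofReal_mul, Complex.mul_cpow_ofReal_nonneg pi_pos.le (sq_nonneg _), neg_div,
      Complex.cpow_neg]
    ring
  have h := mellin_integral_mul_exp_neg (μ := μ) (w := w) (s := s / 2) (p := fun x => π * r x ^ 2)
    (by simpa using hs) (by fun_prop) (hr.mono fun x hx => by positivity)
    ((hw.const_mul _).congr (hpow.mono fun x hx => hx.symm))
  rw [integral_congr_ae hpow, integral_const_mul] at h
  simp only [mul_right_comm π _ (r _ ^ 2)] at h ⊢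
  rw [h, Complex.Gammaℝ_def]
  ring

end Mellin

section RieszKernel

open Module Metric ENNReal

lemma memLp_top_comp_quasiMeasurePreserving {X Y F : Type*} [MeasurableSpace X] [MeasurableSpace Y]
    [NormedAddCommGroup F] {μ : Measure X} {ν : Measure Y} {f : Y → F} {φ : X → Y}
    (hf : MemLp f ∞ ν) (hφ : Measure.QuasiMeasurePreserving φ μ ν) :
    MemLp (fun x => f (φ x)) ∞ μ := by
  refine MemLp.comp_of_map ⟨hf.1.mono_ac hφ.absolutelyContinuous, ?_⟩ hφ.aemeasurable
  rw [eLpNorm_exponent_top]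
  exact (eLpNormEssSup_mono_measure _ hφ.absolutelyContinuous).trans_lt hf.eLpNorm_lt_top

variable {E : Type*} [NormedAddCommGroup E] [NormedSpace ℝ E] [FiniteDimensional ℝ E]
  [MeasurableSpace E] [BorelSpace E] {μ : Measure E} [μ.IsAddHaarMeasure] {f g : E → ℂ} {s : ℂ}

lemma exists_integrable_add_memLp_top_eq_norm_cpow_inv [Nontrivial E] (hs : 0 ≤ s.re)
    (hsE : s.re < finrank ℝ E) : ∃ k₁ k₂ : E → ℂ, Integrable k₁ μ ∧ MemLp k₂ ∞ μ ∧
      (fun x => ((‖x‖ : ℂ) ^ s)⁻¹) = k₁ + k₂ := by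
  let k : E → ℂ := fun x => ((‖x‖ : ℂ) ^ s)⁻¹
  have hkm : Measurable k := by fun_prop
  have hk : ∀ x ≠ 0, ‖k x‖ = ‖x‖ ^ (-s.re) := fun x hx => by
    rw [norm_inv, Complex.norm_cpow_eq_rpow_re_of_pos (norm_pos_iff.2 hx),
      Real.rpow_neg (norm_nonneg x)]
  refine ⟨(ball 0 1).indicator k, (ball 0 1)ᶜ.indicator k, ?_, ?_,
    (Set.indicator_self_add_compl _ _).symm⟩
  · refine (integrable_indicator_iff measurableSet_ball).2
      (integrableOn_ball_of_norm_le_rpow finrank_pos (C := 1) hsE (ae_restrict_of_ae ?_)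
        hkm.aestronglyMeasurable)
    filter_upwards [Measure.ae_ne μ 0] with x hx
    rw [hk x hx, one_mul]
  · refine memLp_top_of_bound (hkm.indicator measurableSet_ball.compl).aestronglyMeasurable 1
      (.of_forall fun x => ?_)
    by_cases hx : x ∈ (ball (0 : E) 1)ᶜ
    · have hx1 : 1 ≤ ‖x‖ := by simpa using hx
      rw [Set.indicator_of_mem hx, hk x (norm_pos_iff.1 (one_pos.trans_le hx1))]
      exact Real.rpow_le_one_of_one_le_of_nonpos hx1 (neg_nonpos.2 hs)
    · simp [Set.indicator_of_notMem hx]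

lemma integrable_div_norm_cpow [Nontrivial E] (hs : 0 ≤ s.re) (hsE : s.re < finrank ℝ E)
    (hf : Integrable f μ) (hf' : MemLp f ∞ μ) :
    Integrable (fun x => f x / (‖x‖ : ℂ) ^ s) μ := by
  obtain ⟨k₁, k₂, hk₁, hk₂, hk⟩ :=
    exists_integrable_add_memLp_top_eq_norm_cpow_inv (μ := μ) hs hsE
  simp only [div_eq_mul_inv, fun x => congrFun hk x, Pi.add_apply, mul_add]
  exact (hk₁.smul_of_top_right hf').add (hf.smul_of_top_left hk₂)

lemma integrable_prod_div_norm_sub_cpow [Nontrivial E] (hs : 0 ≤ s.re) (hsE : s.re < finrank ℝ E)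
    (hf : Integrable f μ) (hf' : MemLp f ∞ μ) (hg : Integrable g μ) :
    Integrable (fun p : E × E => g p.2 * f p.1 / (‖p.1 - p.2‖ : ℂ) ^ s) (μ.prod μ) := by
  obtain ⟨k₁, k₂, hk₁, hk₂, hk⟩ :=
    exists_integrable_add_memLp_top_eq_norm_cpow_inv (μ := μ) hs hsE
  have h₁ := (hg.convolution_integrand (.mul ℂ ℂ) hk₁).smul_of_top_right
    (memLp_top_comp_quasiMeasurePreserving hf' Measure.quasiMeasurePreserving_fst)
  have h₂ := (hf.mul_prod hg).smul_of_top_left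
    (memLp_top_comp_quasiMeasurePreserving hk₂ (quasiMeasurePreserving_sub_of_right_invariant μ μ))
  refine (h₁.add h₂).congr (.of_forall fun p => ?_)
  simp only [div_eq_mul_inv, fun x => congrFun hk x, Pi.add_apply, Pi.mul_apply, smul_eq_mul,
    ContinuousLinearMap.mul_apply']
  ring

end RieszKernel
section Fourier

open Module ENNReal
open scoped Convolution

variable {V : Type*} [NormedAddCommGroup V] [InnerProductSpace ℝ V] [FiniteDimensional ℝ V]
  [MeasurableSpace V] [BorelSpace V] {f g h k : V → ℂ}

lemma memLp_top_fourier {F : Type*} [NormedAddCommGroup F] [NormedSpace ℂ F] {f : V → F}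
    (hf : Integrable f) : MemLp (𝓕 f) ∞ :=
  memLp_top_of_bound (VectorFourier.fourierIntegral_continuous Real.continuous_fourierChar
    continuous_inner hf).aestronglyMeasurable _
    (.of_forall fun ξ => VectorFourier.norm_fourierIntegral_le_integral_norm _ _ _ _ ξ)

lemma integral_fourier_mul_eq_flip (hf : Integrable f) (hg : Integrable g) :
    ∫ ξ, 𝓕 f ξ * g ξ = ∫ x, f x * 𝓕 g x := by
  have h := VectorFourier.integral_fourierIntegral_smul_eq_flip (L := innerₗ V)
    Real.continuous_fourierChar continuous_inner hf hg
  rw [flip_innerₗ] at h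
  exact h

lemma integral_prod_mul_fourier_mul_sub (hg : Integrable g) (hh : Integrable h)
    (hk : Integrable k) :
    ∫ p : V × V, g p.2 * 𝓕 h p.1 * k (p.1 - p.2) = ∫ ξ, 𝓕 g ξ * h ξ * 𝓕 k ξ := by
  have hint : Integrable (fun p : V × V => g p.2 * 𝓕 h p.1 * k (p.1 - p.2))
      (volume.prod volume) :=
    ((hg.convolution_integrand (.mul ℂ ℂ) hk).smul_of_top_right
      (memLp_top_comp_quasiMeasurePreserving (memLp_top_fourier hh)
        Measure.quasiMeasurePreserving_fst)).congr (.of_forall fun p => by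
        simp only [Pi.smul_apply', smul_eq_mul, ContinuousLinearMap.mul_apply']; ring)
  calc
    _ = ∫ x, ∫ y, g y * 𝓕 h x * k (x - y) := integral_prod _ hint
    _ = ∫ x, 𝓕 h x * (g ⋆[.mul ℂ ℂ] k) x := by
      simp only [convolution_def, ContinuousLinearMap.mul_apply', ← integral_const_mul,
        mul_left_comm, mul_assoc]
    _ = ∫ ξ, h ξ * 𝓕 (g ⋆[.mul ℂ ℂ] k) ξ :=
      integral_fourier_mul_eq_flip hh (hg.integrable_convolution _ hk)
    _ = _ := by
      simp only [Real.fourier_mul_convolution_eq hg hk]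
      exact integral_congr_ae (.of_forall fun ξ => by ring)

lemma integrable_exp_neg_mul_norm_sq {t : ℝ} (ht : 0 < t) :
    Integrable (fun v : V => (Real.exp (-(π * t * ‖v‖ ^ 2)) : ℂ)) := by
  have h := GaussianFourier.integrable_cexp_neg_mul_sq_norm_add (V := V)
    (b := (π * t : ℝ)) (by rw [Complex.ofReal_re]; positivity) 0 0
  simpa using h

lemma fourier_exp_neg_mul_norm_sq {t : ℝ} (ht : 0 < t) (ξ : V) :
    𝓕 (fun v : V => (Real.exp (-(π * t * ‖v‖ ^ 2)) : ℂ)) ξ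
      = (t : ℂ) ^ (-(finrank ℝ V / 2 : ℂ)) * (Real.exp (-(π * t⁻¹ * ‖ξ‖ ^ 2)) : ℂ) := by
  have h := fourier_gaussian_innerProductSpace (V := V) (b := (π * t : ℝ))
    (by rw [Complex.ofReal_re]; positivity) ξ
  have hπ : (π : ℂ) ≠ 0 := by exact_mod_cast pi_ne_zero
  have ht' : (t : ℂ) ≠ 0 := by exact_mod_cast ht.ne'
  have hdiv : (π : ℂ) / (π * t : ℝ) = (t : ℂ)⁻¹ := by push_cast; field_simp
  have hexp : -(π : ℂ) ^ 2 * (‖ξ‖ : ℂ) ^ 2 / (π * t : ℝ) = -(π * (t : ℂ)⁻¹ * (‖ξ‖ : ℂ) ^ 2) := by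
    push_cast; field_simp
  rw [hdiv, hexp, Complex.inv_cpow _ _ (Complex.arg_ofReal_of_nonneg ht.le ▸ pi_pos.ne),
    ← Complex.cpow_neg] at h
  simpa using h

lemma integral_prod_mul_fourier_mul_gaussian {t : ℝ} (hg : Integrable g) (hh : Integrable h)
    (ht : 0 < t) :
    ∫ p : V × V, g p.2 * 𝓕 h p.1 * (Real.exp (-(π * t * ‖p.1 - p.2‖ ^ 2)) : ℂ)
      = (t : ℂ) ^ (-(finrank ℝ V / 2 : ℂ)) *
        ∫ ξ, 𝓕 g ξ * h ξ * (Real.exp (-(π * t⁻¹ * ‖ξ‖ ^ 2)) : ℂ) := by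
  rw [integral_prod_mul_fourier_mul_sub hg hh (integrable_exp_neg_mul_norm_sq ht),
    ← integral_const_mul]
  simp only [fourier_exp_neg_mul_norm_sq ht, mul_left_comm (_ * _)]

theorem Gammaℝ_mul_integral_prod_div_norm_sub_cpow {s : ℂ} (hs : 0 < s.re)
    (hsV : s.re < finrank ℝ V) (hg : Integrable g) (hh : Integrable h) (hh' : MemLp h ∞)
    (hFh : Integrable (𝓕 h)) :
    Complex.Gammaℝ (finrank ℝ V - s) *
        ∫ p : V × V, g p.2 * 𝓕 h p.1 / (‖p.1 - p.2‖ : ℂ) ^ (finrank ℝ V - s)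
      = Complex.Gammaℝ s * ∫ ξ, 𝓕 g ξ * h ξ / (‖ξ‖ : ℂ) ^ s := by
  have : Nontrivial V := finrank_pos_iff (R := ℝ).1 (by exact_mod_cast hs.trans hsV)
  have hpos : ∀ᵐ v : V, 0 < ‖v‖ := (Measure.ae_ne volume 0).mono fun v hv => norm_pos_iff.2 hv
  have hsub : ∀ᵐ p : V × V, 0 < ‖p.1 - p.2‖ :=
    (quasiMeasurePreserving_sub_of_right_invariant volume volume).ae hpos
  have hL : Integrable fun p : V × V => g p.2 * 𝓕 h p.1 / (‖p.1 - p.2‖ : ℂ) ^ (finrank ℝ V - s) :=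
    integrable_prod_div_norm_sub_cpow (by simpa using hsV.le) (by simpa using hs) hFh
      (memLp_top_fourier hh) hg
  have hR : Integrable fun ξ => 𝓕 g ξ * h ξ / (‖ξ‖ : ℂ) ^ s :=
    integrable_div_norm_cpow hs.le hsV (hh.smul_of_top_right (memLp_top_fourier hg))
      (hh'.smul (memLp_top_fourier hg))
  rw [← mellin_integral_mul_gaussian (by simpa using hsV) (by fun_prop) hsub hL,
    ← mellin_integral_mul_gaussian hs measurable_norm hpos hR]
  set Φ : ℝ → ℂ := fun t => ∫ ξ, 𝓕 g ξ * h ξ * (Real.exp (-(π * t * ‖ξ‖ ^ 2)) : ℂ)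
  calc
    _ = mellin (fun t => (t : ℂ) ^ (-(finrank ℝ V / 2 : ℂ)) • Φ t⁻¹) ((finrank ℝ V - s) / 2) :=
      setIntegral_congr_fun measurableSet_Ioi fun t ht => by
        simp only [integral_prod_mul_fourier_mul_gaussian hg hh ht]; rfl
    _ = mellin Φ (s / 2) := by
      rw [mellin_cpow_smul, mellin_comp_inv]
      congr 1
      ring

end Fourier

section LinearChangeOfVariables

variable {E F : Type*} [NormedAddCommGroup E] [NormedSpace ℝ E] [FiniteDimensional ℝ E]
  [MeasurableSpace E] [BorelSpace E] {μ : Measure E} [μ.IsAddHaarMeasure] [NormedAddCommGroup F]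

lemma memLp_top_comp_continuousLinearEquiv (A : E ≃L[ℝ] E) {f : E → F} (hf : MemLp f ⊤ μ) :
    MemLp (fun x => f (A x)) ⊤ μ :=
  memLp_top_comp_quasiMeasurePreserving hf <|
    Measure.ContinuousLinearMap.quasiMeasurePreserving μ (A : E →L[ℝ] E)
      A.toLinearEquiv.isUnit_det'.ne_zero

variable [NormedSpace ℝ F]

lemma abs_det_smul_integral_comp_continuousLinearEquiv (A : E ≃L[ℝ] E) (f : E → F) :
    |(A : E →L[ℝ] E).det| • ∫ x, f (A x) ∂μ = ∫ x, f x ∂μ := by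
  rw [← integral_smul]
  simpa using (integral_image_eq_integral_abs_det_fderiv_smul μ MeasurableSet.univ
    (fun x _ => (A : E →L[ℝ] E).hasFDerivWithinAt) A.injective.injOn f).symm

lemma integrable_comp_continuousLinearEquiv (A : E ≃L[ℝ] E) {f : E → F} (hf : Integrable f μ) :
    Integrable (fun x => f (A x)) μ := by
  have h := (integrableOn_image_iff_integrableOn_abs_det_fderiv_smul μ MeasurableSet.univ
    (fun x _ => (A : E →L[ℝ] E).hasFDerivWithinAt) A.injective.injOn f).1 (by simpa using hf)
  exact (integrable_smul_iff (abs_ne_zero.2 A.toLinearEquiv.isUnit_det'.ne_zero) _).1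
    (integrableOn_univ.1 h)

lemma fourier_comp_continuousLinearEquiv_symm {V : Type*} [NormedAddCommGroup V]
    [InnerProductSpace ℝ V] [FiniteDimensional ℝ V] [MeasurableSpace V] [BorelSpace V]
    {F : Type*} [NormedAddCommGroup F] [NormedSpace ℂ F] (A : V ≃L[ℝ] V) (f : V → F) (w : V) :
    𝓕 (fun v => f (A.symm v)) w
      = |(A : V →L[ℝ] V).det| • 𝓕 f (ContinuousLinearMap.adjoint (A : V →L[ℝ] V) w) := by
  rw [Real.fourier_eq, ← abs_det_smul_integral_comp_continuousLinearEquiv A, Real.fourier_eq]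
  simp [ContinuousLinearMap.adjoint_inner_right]

end LinearChangeOfVariables

section RieszPotential

open ENNReal

variable {n : ℕ} {β : ℝ} {f g h : Rn n → ℂ}

lemma ofReal_gammaC (n : ℕ) (β : ℝ) :
    (gammaC n β : ℂ)
      = ((2 * π) ^ β : ℝ) * Complex.Gammaℝ β / Complex.Gammaℝ (n - β) := by
  have hΓ (x : ℝ) : Complex.Gammaℝ x = (π ^ (-x / 2) * Real.Gamma (x / 2) : ℝ) := by
    rw [Complex.Gammaℝ_def, Complex.ofReal_mul, Complex.ofReal_cpow pi_pos.le,
      ← Complex.Gamma_ofReal]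
    push_cast
    rfl
  have hpow : π ^ ((n : ℝ) / 2) = π ^ β * π ^ (-β / 2) / π ^ (-((n : ℝ) - β) / 2) := by
    rw [← Real.rpow_add pi_pos, ← Real.rpow_sub pi_pos]
    congr 1
    ring
  have hreal : gammaC n β = (2 * π) ^ β * (π ^ (-β / 2) * Real.Gamma (β / 2)) /
      (π ^ (-((n : ℝ) - β) / 2) * Real.Gamma (((n : ℝ) - β) / 2)) := by
    rw [gammaC, Real.mul_rpow zero_le_two pi_pos.le, hpow]
    ring
  rw [← Complex.ofReal_natCast, ← Complex.ofReal_sub, hΓ, hΓ, hreal]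
  push_cast
  rfl

lemma integral_rieszPot_mul (hβ : 0 < β) (hβn : β < n) (hf : Integrable f) (hf' : MemLp f ∞)
    (hg : Integrable g) :
    ∫ x, rieszPot n β g x * f x = (gammaC n β : ℂ)⁻¹ *
      ∫ p : Rn n × Rn n, g p.2 * f p.1 / (‖p.1 - p.2‖ : ℂ) ^ ((n : ℂ) - β) := by
  have : Nonempty (Fin n) := ⟨⟨0, by exact_mod_cast hβ.trans hβn⟩⟩
  have hint := integrable_prod_div_norm_sub_cpow (s := (n : ℂ) - β) (μ := volume)
    (by simpa using hβn.le) (by simpa using hβ) hf hf' hg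
  rw [Measure.volume_eq_prod, integral_prod _ hint, ← integral_const_mul]
  refine integral_congr_ae (.of_forall fun x => ?_)
  simp only [rieszPot, mul_assoc, ← integral_mul_const, div_mul_eq_mul_div,
    Complex.ofReal_cpow (norm_nonneg _)]
  push_cast
  rw [one_div]

theorem integral_rieszPot_mul_fourier (hβ : 0 < β) (hβn : β < n) (hg : Integrable g)
    (hh : Integrable h) (hh' : MemLp h ∞) (hFh : Integrable (𝓕 h)) :
    ∫ x, rieszPot n β g x * 𝓕 h x
      = ∫ ξ, (((2 * π) ^ (-β) * ‖ξ‖ ^ (-β) : ℝ) : ℂ) * (𝓕 g ξ * h ξ) := by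
  have hΓ : Complex.Gammaℝ β ≠ 0 := Complex.Gammaℝ_ne_zero_of_re_pos (by simpa)
  have h2π : (((2 * π) ^ β : ℝ) : ℂ) ≠ 0 := by
    exact_mod_cast (Real.rpow_pos_of_pos two_pi_pos β).ne'
  have hfe := Gammaℝ_mul_integral_prod_div_norm_sub_cpow (s := β) (by simpa) (by simpa) hg hh hh'
    hFh
  rw [finrank_euclideanSpace_fin] at hfe
  calc
    _ = (((2 * π) ^ β : ℝ) : ℂ)⁻¹ * ∫ ξ, 𝓕 g ξ * h ξ / (‖ξ‖ : ℂ) ^ (β : ℂ) := by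
      rw [integral_rieszPot_mul hβ hβn hFh (memLp_top_fourier hh) hg, ofReal_gammaC]
      field_simp
      linear_combination hfe
    _ = _ := by
      rw [← integral_const_mul]
      refine integral_congr_ae (.of_forall fun ξ => ?_)
      simp only [Real.rpow_neg two_pi_pos.le, Real.rpow_neg (norm_nonneg _), Complex.ofReal_mul,
        Complex.ofReal_inv, ← Complex.ofReal_cpow (norm_nonneg _)]
      ring

theorem integral_rieszPot_mul_fourier_comp_adjoint (A : Rn n ≃L[ℝ] Rn n) (hβ : 0 < β)
    (hβn : β < n) (hg : Integrable g) (hh : Integrable h) (hh' : MemLp h ∞)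
    (hFh : Integrable fun x => 𝓕 h (ContinuousLinearMap.adjoint (A : Rn n →L[ℝ] Rn n) x)) :
    ∫ x, rieszPot n β g x * 𝓕 h (ContinuousLinearMap.adjoint (A : Rn n →L[ℝ] Rn n) x)
      = ∫ u, (((2 * π) ^ (-β) * ‖A u‖ ^ (-β) : ℝ) : ℂ) * (𝓕 g (A u) * h u) := by
  let d : ℝ := |(A : Rn n →L[ℝ] Rn n).det|
  have hd : d ≠ 0 := abs_ne_zero.2 A.toLinearEquiv.isUnit_det'.ne_zero
  have hF := funext (fourier_comp_continuousLinearEquiv_symm A h)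
  refine smul_right_injective ℂ hd ?_
  calc
    d • ∫ x, rieszPot n β g x * 𝓕 h (ContinuousLinearMap.adjoint (A : Rn n →L[ℝ] Rn n) x)
      = ∫ x, rieszPot n β g x * 𝓕 (fun v => h (A.symm v)) x := by
      simp only [hF, mul_smul_comm, integral_smul, d]
    _ = ∫ ξ, (((2 * π) ^ (-β) * ‖ξ‖ ^ (-β) : ℝ) : ℂ) * (𝓕 g ξ * h (A.symm ξ)) :=
      integral_rieszPot_mul_fourier hβ hβn hg (integrable_comp_continuousLinearEquiv A.symm hh)
        (memLp_top_comp_continuousLinearEquiv A.symm hh') (hF ▸ hFh.smul d)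
    _ = d • ∫ u, (((2 * π) ^ (-β) * ‖A u‖ ^ (-β) : ℝ) : ℂ) * (𝓕 g (A u) * h u) := by
      rw [← abs_det_smul_integral_comp_continuousLinearEquiv A]
      simp only [A.symm_apply_apply, d]

end RieszPotential

section Chirp

open ENNReal

variable {n : ℕ} (α : Rn n) (f : Rn n → ℂ)

lemma chirp_eq_exp_ofReal_mul_I (x : Rn n) :
    chirp α x = Complex.exp ((2 * π * ∑ k, Real.cot (α k) / 2 * x k ^ 2 : ℝ) * Complex.I) := by
  rw [chirp]
  push_cast
  ring_nf

lemma norm_chirp (x : Rn n) : ‖chirp α x‖ = 1 := by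
  rw [chirp_eq_exp_ofReal_mul_I, Complex.norm_exp_ofReal_mul_I]

lemma chirp_neg_mul_chirp (x : Rn n) : chirp (-α) x * chirp α x = 1 := by
  have hcot (a : ℝ) : Real.cot (-a) = -Real.cot a := by
    rw [Real.cot_eq_cos_div_sin, Real.cot_eq_cos_div_sin, Real.cos_neg, Real.sin_neg, div_neg]
  rw [chirp, chirp, ← Complex.exp_add]
  simp [hcot, neg_div]

lemma hasTemperateGrowth_exp_ofReal_mul_I :
    Function.HasTemperateGrowth fun t : ℝ => Complex.exp (t * Complex.I) := by
  have hderiv (m : ℕ) : iteratedDeriv m (fun t : ℝ => Complex.exp (t * Complex.I))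
      = fun t : ℝ => Complex.I ^ m * Complex.exp (t * Complex.I) := by
    induction m with
    | zero => simp
    | succ m ih =>
      ext t
      have h : HasDerivAt (fun t : ℝ => Complex.exp (t * Complex.I))
          (Complex.exp (t * Complex.I) * Complex.I) t := by
        simpa using ((Complex.ofRealCLM.hasDerivAt (x := t)).mul_const Complex.I).cexp
      rw [iteratedDeriv_succ, ih, (h.const_mul _).deriv]
      ring
  refine ⟨(Complex.ofRealCLM.contDiff.mul contDiff_const).cexp, fun m => ⟨0, 1, fun t => ?_⟩⟩
  rw [norm_iteratedFDeriv_eq_norm_iteratedDeriv, hderiv]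
  simp [Complex.norm_exp]

lemma hasTemperateGrowth_chirp : Function.HasTemperateGrowth (chirp α) := by
  have hk (k : Fin n) : Function.HasTemperateGrowth fun x : Rn n => x k :=
    (EuclideanSpace.proj (𝕜 := ℝ) k : Rn n →L[ℝ] ℝ).hasTemperateGrowth
  have hphase : Function.HasTemperateGrowth
      fun x : Rn n => 2 * π * ∑ k, Real.cot (α k) / 2 * x k ^ 2 :=
    (Function.HasTemperateGrowth.const _).mul <| .sum fun k _ =>
      (Function.HasTemperateGrowth.const _).mul ((hk k).pow 2)
  rw [funext (chirp_eq_exp_ofReal_mul_I α)]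
  exact hasTemperateGrowth_exp_ofReal_mul_I.comp hphase

lemma memLp_top_chirp : MemLp (chirp α) ∞ :=
  memLp_top_of_bound (hasTemperateGrowth_chirp α).1.continuous.aestronglyMeasurable 1
    (.of_forall fun x => (norm_chirp α x).le)

lemma rieszPotChirp_eq (β : ℝ) (x : Rn n) :
    rieszPotChirp α β f x = chirp (-α) x * rieszPot n β (fun y => f y * chirp α y) x := by
  rw [rieszPotChirp, rieszPot]
  ring

end Chirp

section FractionalFourier

open ENNReal
open scoped InnerProductSpace

variable {n : ℕ} {α : Rn n} {f φ : Rn n → ℂ}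

lemma sin_ne_zero_of_notPiZ (hα : notPiZ α) (k : Fin n) : Real.sin (α k) ≠ 0 := fun h =>
  let ⟨m, hm⟩ := Real.sin_eq_zero_iff.1 h
  hα k m hm.symm

lemma tilde_apply (α u : Rn n) (k : Fin n) : tilde α u k = u k / Real.sin (α k) := rfl

/-- The map `u ↦ ũ`, as a continuous linear automorphism of `ℝⁿ`. -/
def tildeEquiv (hα : notPiZ α) : Rn n ≃L[ℝ] Rn n :=
  LinearEquiv.toContinuousLinearEquiv
    { toFun := tilde α
      invFun := fun u => WithLp.toLp 2 fun k => u k * Real.sin (α k)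
      map_add' := fun x y => by ext k; simp [tilde_apply, add_div]
      map_smul' := fun c x => by ext k; simp [tilde_apply, mul_div_assoc]
      left_inv := fun x => by ext k; simp [tilde_apply, sin_ne_zero_of_notPiZ hα k]
      right_inv := fun x => by ext k; simp [tilde_apply, sin_ne_zero_of_notPiZ hα k] }

@[simp]
lemma tildeEquiv_apply (hα : notPiZ α) (u : Rn n) : tildeEquiv hα u = tilde α u := rfl

lemma inner_tilde_left (α x y : Rn n) : ⟪tilde α x, y⟫_ℝ = ⟪x, tilde α y⟫_ℝ := by
  simp only [PiLp.inner_apply, tilde_apply, RCLike.inner_apply, conj_trivial]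
  exact Finset.sum_congr rfl fun k _ => by ring

lemma adjoint_tildeEquiv (hα : notPiZ α) :
    ContinuousLinearMap.adjoint (tildeEquiv hα : Rn n →L[ℝ] Rn n) = tildeEquiv hα :=
  ((ContinuousLinearMap.eq_adjoint_iff _ _).2 (inner_tilde_left α)).symm

lemma cConst_ne_zero (α : Rn n) : cConst α ≠ 0 :=
  Finset.prod_ne_zero_iff.2 fun k _ => (Complex.cpow_ne_zero_iff_of_exponent_ne_zero
    (by norm_num)).2 fun h => by
      simpa [-Complex.ofReal_cot] using congrArg Complex.re h

lemma frftKernel_eq (α x u : Rn n) : frftKernel α x u = cConst α * chirp α u *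
    (Complex.exp ((-2 * π * ⟪x, tilde α u⟫_ℝ : ℝ) * Complex.I) * chirp α x) := by
  rw [frftKernel, Finset.prod_mul_distrib, ← Complex.exp_sum, ← cConst, mul_assoc (cConst α), chirp,
    chirp, ← Complex.exp_add, ← Complex.exp_add]
  congr 2
  simp only [PiLp.inner_apply, tilde_apply, RCLike.inner_apply, conj_trivial]
  push_cast
  simp only [Finset.mul_sum, Finset.sum_mul, ← Finset.sum_add_distrib]
  exact Finset.sum_congr rfl fun k _ => by ring

lemma frft_eq (α : Rn n) (f : Rn n → ℂ) (u : Rn n) :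
    frft α f u = cConst α * chirp α u * 𝓕 (fun x => f x * chirp α x) (tilde α u) := by
  rw [frft, Real.fourier_eq', ← integral_const_mul]
  refine integral_congr_ae (.of_forall fun x => ?_)
  simp only [frftKernel_eq, smul_eq_mul]
  ring

lemma integrable_frft_iff :
    Integrable (frft α f) ↔ Integrable fun u => 𝓕 (fun x => f x * chirp α x) (tilde α u) := by
  refine ⟨fun h => ?_, fun h => ?_⟩
  · refine ((h.smul_of_top_right (memLp_top_chirp (-α))).const_mul (cConst α)⁻¹).congr
      (.of_forall fun u => ?_)
    simp only [Pi.smul_apply', smul_eq_mul, frft_eq]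
    field_simp [cConst_ne_zero α]
    rw [chirp_neg_mul_chirp, one_mul]
  · refine ((h.smul_of_top_right (memLp_top_chirp α)).const_mul (cConst α)).congr
      (.of_forall fun u => ?_)
    simp only [Pi.smul_apply', smul_eq_mul, frft_eq, mul_assoc]

lemma integrable_frft (hα : notPiZ α) (f : 𝓢(Rn n, ℂ)) : Integrable (frft α f) := by
  let h : 𝓢(Rn n, ℂ) := smulLeftCLM ℂ (chirp α) f
  have hh : (fun x => f x * chirp α x) = h := by
    ext x
    rw [smulLeftCLM_apply_apply (hasTemperateGrowth_chirp α), smul_eq_mul, mul_comm]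
  rw [integrable_frft_iff, hh, ← fourier_coe]
  exact (compCLMOfContinuousLinearEquiv ℂ (tildeEquiv hα) (𝓕 h)).integrable

theorem frft_rieszPotChirp_general (β : ℝ) (hβ : 0 < β) (hβn : β < n) (hα : notPiZ α)
    (hf : Integrable f) (hφ : Integrable φ) (hφ' : MemLp φ ∞) (hφF : Integrable (frft α φ)) :
    ∫ x, rieszPotChirp α β f x * frft α φ x
      = ∫ u, (((2 * π) ^ (-β) * ‖tilde α u‖ ^ (-β) : ℝ) : ℂ) * frft α f u * φ u := by
  let g : Rn n → ℂ := fun x => f x * chirp α x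
  let h : Rn n → ℂ := fun x => φ x * chirp α x
  have hg : Integrable g := hf.smul_of_top_left (memLp_top_chirp α)
  have hh : Integrable h := hφ.smul_of_top_left (memLp_top_chirp α)
  have hh' : MemLp h ∞ := (memLp_top_chirp α).smul hφ'
  have key := integral_rieszPot_mul_fourier_comp_adjoint (tildeEquiv hα) hβ hβn hg hh hh'
  simp only [adjoint_tildeEquiv, ContinuousLinearEquiv.coe_coe, tildeEquiv_apply] at key
  calc
    _ = ∫ x, cConst α * (rieszPot n β g x * 𝓕 h (tilde α x)) :=
      integral_congr_ae (.of_forall fun x => by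
        simp only [rieszPotChirp_eq, frft_eq]
        linear_combination (cConst α * rieszPot n β g x * 𝓕 h (tilde α x)) *
          chirp_neg_mul_chirp α x)
    _ = ∫ u, cConst α * ((((2 * π) ^ (-β) * ‖tilde α u‖ ^ (-β) : ℝ) : ℂ) *
          (𝓕 g (tilde α u) * h u)) := by
      rw [integral_const_mul, integral_const_mul, key (integrable_frft_iff.1 hφF)]
    _ = _ := integral_congr_ae (.of_forall fun u => by
      simp only [frft_eq, g, h]
      ring)

end FractionalFourier

/-- `F_α(I_β^α f) = (2π)^{-β}|ũ|^{-β} F_α f` in `𝒮'`. -/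
theorem frft_rieszPotChirp {n : ℕ} (β : ℝ) (hβ : 0 < β) (hβn : β < n)
    (α : Rn n) (hα : notPiZ α) (f : 𝓢(Rn n, ℂ)) (φ : 𝓢(Rn n, ℂ)) :
    ∫ x, rieszPotChirp α β (⇑f) x * frft α (⇑φ) x
      = ∫ u, (((2 * π) ^ (-β) * ‖tilde α u‖ ^ (-β) : ℝ) : ℂ) * frft α (⇑f) u * φ u :=
  frft_rieszPotChirp_general β hβ hβn hα f.integrable φ.integrable (φ.memLp ⊤)
    (integrable_frft hα φ)
end
end
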